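/- Let 𝒜 be a weakly idempotent complete exact category, 𝒳 and 𝒴 full additive subcategories of 𝒜 closed under isomorphisms and direct summands, and ω = 𝒳∩𝒴. The following are equivalent: (1) (𝒳,𝒴) is a generalized projective complete cotorsion pair (i.e. a complete cotorsion pair with 𝒴 thick and 𝒳∩𝒴 = 𝒫 the class of projective objects) and 𝒜 has enough projective objects; (2) (𝒳,𝒴) is a hereditary complete cotorsion pair, 𝒜 has enough projective objects, and ω = 𝒫; (3) (CoFib_ω, Fib_ω, Weq_ω) is an exact model structure on 𝒜; (4) (CoFib_ω, Fib_ω, Weq_ω) is a projective model structure on 𝒜. -/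

import Mathlib

open CategoryTheory Limits ZeroObject

universe v u

/-- An exact structure (Quillen exact category) on an additive category `𝒜`:
a class of conflations (kernel-cokernel pairs), closed under isomorphisms,
with identities deflations, deflations closed under composition and stable
under pullback, and inflations stable under pushout. -/
structure ExactStructure (𝒜 : Type u) [Category.{v} 𝒜] [Preadditive 𝒜]
    [HasZeroObject 𝒜] [HasBinaryBiproducts 𝒜] : Type (max u v) where
  conflation : ∀ ⦃X Y Z : 𝒜⦄, (X ⟶ Y) → (Y ⟶ Z) → Prop
  comp_zero : ∀ {X Y Z : 𝒜} {i : X ⟶ Y} {d : Y ⟶ Z}, conflation i d → i ≫ d = 0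
  isKernel : ∀ {X Y Z : 𝒜} {i : X ⟶ Y} {d : Y ⟶ Z} (h : conflation i d),
    Nonempty (IsLimit (KernelFork.ofι i (comp_zero h)))
  isCokernel : ∀ {X Y Z : 𝒜} {i : X ⟶ Y} {d : Y ⟶ Z} (h : conflation i d),
    Nonempty (IsColimit (CokernelCofork.ofπ d (comp_zero h)))
  conflation_iso : ∀ {X Y Z X' Y' Z' : 𝒜} {i : X ⟶ Y} {d : Y ⟶ Z}
    (eX : X ≅ X') (eY : Y ≅ Y') (eZ : Z ≅ Z') {i' : X' ⟶ Y'} {d' : Y' ⟶ Z'},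
    conflation i d → i ≫ eY.hom = eX.hom ≫ i' → d ≫ eZ.hom = eY.hom ≫ d' →
    conflation i' d'
  id_deflation : ∀ X : 𝒜, conflation (0 : (0 : 𝒜) ⟶ X) (𝟙 X)
  deflation_comp : ∀ {X Y Z X' W : 𝒜} {i : X ⟶ Y} {d : Y ⟶ Z} {i' : X' ⟶ Z} {d' : Z ⟶ W},
    conflation i d → conflation i' d' → ∃ (K : 𝒜) (k : K ⟶ Y), conflation k (d ≫ d')
  pullback_deflation : ∀ {X Y Z Z' : 𝒜} {i : X ⟶ Y} {d : Y ⟶ Z},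
    conflation i d → ∀ (f : Z' ⟶ Z),
    ∃ (Y' : 𝒜) (f' : Y' ⟶ Y) (d' : Y' ⟶ Z') (K : 𝒜) (k : K ⟶ Y'),
      IsPullback f' d' d f ∧ conflation k d'
  pushout_inflation : ∀ {X Y Z X' : 𝒜} {i : X ⟶ Y} {d : Y ⟶ Z},
    conflation i d → ∀ (f : X ⟶ X'),
    ∃ (Y' : 𝒜) (f' : Y ⟶ Y') (i' : X' ⟶ Y') (Q : 𝒜) (q : Y' ⟶ Q),
      IsPushout i f f' i' ∧ conflation i' q

variable {𝒜 : Type u} [Category.{v} 𝒜] [Preadditive 𝒜] [HasZeroObject 𝒜]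
  [HasBinaryBiproducts 𝒜]

/-- `f` is an inflation: the first map of some conflation. -/
def IsInflation (E : ExactStructure 𝒜) {X Y : 𝒜} (i : X ⟶ Y) : Prop :=
  ∃ (Z : 𝒜) (d : Y ⟶ Z), E.conflation i d

/-- `f` is a deflation: the second map of some conflation. -/
def IsDeflation (E : ExactStructure 𝒜) {Y Z : 𝒜} (d : Y ⟶ Z) : Prop :=
  ∃ (X : 𝒜) (i : X ⟶ Y), E.conflation i d

/-- `𝒜` is weakly idempotent complete: every split epimorphism is a deflation. -/
def IsWIC (E : ExactStructure 𝒜) : Prop :=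
  ∀ {X Y : 𝒜} (d : X ⟶ Y) (s : Y ⟶ X), s ≫ d = 𝟙 Y → IsDeflation E d

/-- `Ext¹(A,B) = 0`: every conflation `B ⟶ M ⟶ A` splits. -/
def Ext1IsZero (E : ExactStructure 𝒜) (A B : 𝒜) : Prop :=
  ∀ {M : 𝒜} (i : B ⟶ M) (d : M ⟶ A), E.conflation i d → ∃ r : M ⟶ B, i ≫ r = 𝟙 B

/-- `(X, Y)` is a cotorsion pair: each class is the `Ext¹`-orthogonal of the other. -/
def IsCotorsionPair (E : ExactStructure 𝒜) (X Y : Set 𝒜) : Prop :=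
  (∀ A : 𝒜, A ∈ X ↔ ∀ B ∈ Y, Ext1IsZero E A B) ∧
  (∀ B : 𝒜, B ∈ Y ↔ ∀ A ∈ X, Ext1IsZero E A B)

/-- Completeness of a cotorsion pair: every object has approximation sequences. -/
def IsCompleteCP (E : ExactStructure 𝒜) (X Y : Set 𝒜) : Prop :=
  ∀ A : 𝒜,
    (∃ (Y₀ X₀ : 𝒜) (i : Y₀ ⟶ X₀) (d : X₀ ⟶ A), E.conflation i d ∧ X₀ ∈ X ∧ Y₀ ∈ Y) ∧
    (∃ (Y₁ X₁ : 𝒜) (i : A ⟶ Y₁) (d : Y₁ ⟶ X₁), E.conflation i d ∧ X₁ ∈ X ∧ Y₁ ∈ Y)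

/-- Heredity of a cotorsion pair: `X` is closed under kernels of deflations and
`Y` is closed under cokernels of inflations. -/
def IsHereditaryCP (E : ExactStructure 𝒜) (X Y : Set 𝒜) : Prop :=
  (∀ {K A B : 𝒜} (i : K ⟶ A) (d : A ⟶ B), E.conflation i d → A ∈ X → B ∈ X → K ∈ X) ∧
  (∀ {K A B : 𝒜} (i : K ⟶ A) (d : A ⟶ B), E.conflation i d → K ∈ Y → A ∈ Y → B ∈ Y)

/-- `t : W ⟶ B` is a right `ω`-approximation of `B`. -/
def IsRightApprox (ω : Set 𝒜) {W B : 𝒜} (t : W ⟶ B) : Prop :=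
  W ∈ ω ∧ ∀ (W' : 𝒜), W' ∈ ω → ∀ g : W' ⟶ B, ∃ h : W' ⟶ W, h ≫ t = g

/-- `ω` is contravariantly finite: every object has a right `ω`-approximation. -/
def IsContravariantlyFinite (ω : Set 𝒜) : Prop :=
  ∀ B : 𝒜, ∃ (W : 𝒜) (t : W ⟶ B), IsRightApprox ω t

/-- A full additive subcategory closed under isomorphisms and direct summands,
viewed as a class of objects. -/
def AdditivelyClosed (S : Set 𝒜) : Prop :=
  (0 : 𝒜) ∈ S ∧ (∀ A B : 𝒜, A ∈ S → B ∈ S → (A ⊞ B) ∈ S) ∧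
  (∀ {A B : 𝒜}, (A ≅ B) → A ∈ S → B ∈ S) ∧
  (∀ {A B : 𝒜} (i : A ⟶ B) (r : B ⟶ A), i ≫ r = 𝟙 A → B ∈ S → A ∈ S)

/-- `CoFib_ω`: inflations with cokernel in `X`. -/
def CoFibO (E : ExactStructure 𝒜) (X : Set 𝒜) : MorphismProperty 𝒜 :=
  fun _ B f => ∃ (Z : 𝒜) (d : B ⟶ Z), E.conflation f d ∧ Z ∈ X

/-- `Fib_ω`: the `ω`-epic morphisms. -/
def FibO (ω : Set 𝒜) : MorphismProperty 𝒜 :=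
  fun A B f => ∀ (W : 𝒜), W ∈ ω → ∀ g : W ⟶ B, ∃ h : W ⟶ A, h ≫ f = g

/-- `Weq_ω`: morphisms `f : A ⟶ B` such that for some `W ∈ ω` and `t : W ⟶ B`,
`(f,t) : A ⊞ W ⟶ B` is a deflation with kernel in `Y`. -/
def WeqO (E : ExactStructure 𝒜) (ω Y : Set 𝒜) : MorphismProperty 𝒜 :=
  fun A B f => ∃ (W : 𝒜) (_ : W ∈ ω) (t : W ⟶ B) (K : 𝒜) (k : K ⟶ A ⊞ W),
    E.conflation k (biprod.desc f t) ∧ K ∈ Y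

/-- `TCoFib_ω`: split monomorphisms with cokernel in `ω`. -/
def TCoFibO (E : ExactStructure 𝒜) (ω : Set 𝒜) : MorphismProperty 𝒜 :=
  fun A B f => (∃ r : B ⟶ A, f ≫ r = 𝟙 A) ∧
    ∃ (Z : 𝒜) (d : B ⟶ Z), E.conflation f d ∧ Z ∈ ω

/-- `TFib_ω`: deflations with kernel in `Y`. -/
def TFibO (E : ExactStructure 𝒜) (Y : Set 𝒜) : MorphismProperty 𝒜 :=
  fun A _ f => ∃ (K : 𝒜) (k : K ⟶ A), E.conflation k f ∧ K ∈ Y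

/-- `g` is a retract of `f`. -/
def IsRetractMor {A' B' A B : 𝒜} (g : A' ⟶ B') (f : A ⟶ B) : Prop :=
  ∃ (φ₁ : A' ⟶ A) (ψ₁ : A ⟶ A') (φ₂ : B' ⟶ B) (ψ₂ : B ⟶ B'),
    φ₁ ≫ ψ₁ = 𝟙 A' ∧ φ₂ ≫ ψ₂ = 𝟙 B' ∧ φ₁ ≫ f = g ≫ φ₂ ∧ f ≫ ψ₂ = ψ₁ ≫ g

/-- A (closed, Quillen) model structure, given by classes of cofibrations,
fibrations and weak equivalences. -/
structure IsModelStructure (C F W : MorphismProperty 𝒜) : Prop where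
  weq_comp : ∀ {X Y Z : 𝒜} (f : X ⟶ Y) (g : Y ⟶ Z), W f → W g → W (f ≫ g)
  weq_cancel_left : ∀ {X Y Z : 𝒜} (f : X ⟶ Y) (g : Y ⟶ Z), W f → W (f ≫ g) → W g
  weq_cancel_right : ∀ {X Y Z : 𝒜} (f : X ⟶ Y) (g : Y ⟶ Z), W g → W (f ≫ g) → W f
  retract_cofib : ∀ {A' B' A B : 𝒜} (g : A' ⟶ B') (f : A ⟶ B),
    IsRetractMor g f → C f → C g
  retract_fib : ∀ {A' B' A B : 𝒜} (g : A' ⟶ B') (f : A ⟶ B),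
    IsRetractMor g f → F f → F g
  retract_weq : ∀ {A' B' A B : 𝒜} (g : A' ⟶ B') (f : A ⟶ B),
    IsRetractMor g f → W f → W g
  lifting_left : ∀ {A B X Y : 𝒜} (i : A ⟶ B) (p : X ⟶ Y) (a : A ⟶ X) (b : B ⟶ Y),
    C i → W i → F p → a ≫ p = i ≫ b → ∃ s : B ⟶ X, i ≫ s = a ∧ s ≫ p = b
  lifting_right : ∀ {A B X Y : 𝒜} (i : A ⟶ B) (p : X ⟶ Y) (a : A ⟶ X) (b : B ⟶ Y),
    C i → F p → W p → a ≫ p = i ≫ b → ∃ s : B ⟶ X, i ≫ s = a ∧ s ≫ p = b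
  fact_left : ∀ {A B : 𝒜} (f : A ⟶ B), ∃ (Z : 𝒜) (i : A ⟶ Z) (p : Z ⟶ B),
    i ≫ p = f ∧ C i ∧ W i ∧ F p
  fact_right : ∀ {A B : 𝒜} (f : A ⟶ B), ∃ (Z : 𝒜) (j : A ⟶ Z) (q : Z ⟶ B),
    j ≫ q = f ∧ C j ∧ F q ∧ W q

/-- An object is cofibrant if `0 ⟶ X` is a cofibration. -/
def Cofibrant (C : MorphismProperty 𝒜) (A : 𝒜) : Prop := C (0 : (0 : 𝒜) ⟶ A)

/-- An object is fibrant if `X ⟶ 0` is a fibration. -/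
def Fibrant (F : MorphismProperty 𝒜) (A : 𝒜) : Prop := F (0 : A ⟶ (0 : 𝒜))

/-- An object is trivial if `0 ⟶ X` is a weak equivalence. -/
def TrivialObj (W : MorphismProperty 𝒜) (A : 𝒜) : Prop := W (0 : (0 : 𝒜) ⟶ A)

/-- `P` is projective in the exact category. -/
def IsProjObj (E : ExactStructure 𝒜) (P : 𝒜) : Prop :=
  ∀ {A B : 𝒜} (d : A ⟶ B), IsDeflation E d → ∀ g : P ⟶ B, ∃ h : P ⟶ A, h ≫ d = g

/-- The exact category has enough projective objects. -/
def HasEnoughProj (E : ExactStructure 𝒜) : Prop :=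
  ∀ X : 𝒜, ∃ (P : 𝒜) (d : P ⟶ X), IsProjObj E P ∧ IsDeflation E d

/-- Cofibrations are exactly the inflations with cofibrant cokernel. -/
def CofibsAreInflWithCofibCoker (E : ExactStructure 𝒜) (C : MorphismProperty 𝒜) : Prop :=
  ∀ {A B : 𝒜} (f : A ⟶ B),
    C f ↔ ∃ (Z : 𝒜) (d : B ⟶ Z), E.conflation f d ∧ Cofibrant C Z

/-- Fibrations are exactly the deflations with fibrant kernel. -/
def FibsAreDeflWithFibKer (E : ExactStructure 𝒜) (F : MorphismProperty 𝒜) : Prop :=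
  ∀ {A B : 𝒜} (f : A ⟶ B),
    F f ↔ ∃ (K : 𝒜) (k : K ⟶ A), E.conflation k f ∧ Fibrant F K

/-- Trivial fibrations are exactly the deflations with trivially fibrant kernel. -/
def TrivFibsAreDeflWithTrivFibKer (E : ExactStructure 𝒜)
    (F W : MorphismProperty 𝒜) : Prop :=
  ∀ {A B : 𝒜} (f : A ⟶ B),
    (F f ∧ W f) ↔ ∃ (K : 𝒜) (k : K ⟶ A), E.conflation k f ∧ Fibrant F K ∧ TrivialObj W K

/-- Every cofibration is an inflation. -/
def CofibsAreInfl (E : ExactStructure 𝒜) (C : MorphismProperty 𝒜) : Prop :=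
  ∀ {A B : 𝒜} (f : A ⟶ B), C f → IsInflation E f

/-- Every trivial fibration is a deflation. -/
def TrivFibsAreDefl (E : ExactStructure 𝒜) (F W : MorphismProperty 𝒜) : Prop :=
  ∀ {A B : 𝒜} (f : A ⟶ B), F f → W f → IsDeflation E f

/-- An exact model structure in the sense of Gillespie. -/
def IsExactModelStr (E : ExactStructure 𝒜) (C F W : MorphismProperty 𝒜) : Prop :=
  IsModelStructure C F W ∧ CofibsAreInflWithCofibCoker E C ∧ FibsAreDeflWithFibKer E F

/-- A weakly projective model structure: every object is fibrant, cofibrations are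
exactly the inflations with cofibrant cokernel, and trivial fibrations are exactly
the deflations with trivially fibrant kernel. -/
def IsWeaklyProjModelStr (E : ExactStructure 𝒜) (C F W : MorphismProperty 𝒜) : Prop :=
  IsModelStructure C F W ∧ (∀ A : 𝒜, Fibrant F A) ∧
    CofibsAreInflWithCofibCoker E C ∧ TrivFibsAreDeflWithTrivFibKer E F W

/-- A projective model structure: an exact model structure with every object fibrant. -/
def IsProjectiveModelStr (E : ExactStructure 𝒜) (C F W : MorphismProperty 𝒜) : Prop :=
  IsExactModelStr E C F W ∧ (∀ A : 𝒜, Fibrant F A)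

/-- A class of objects is thick: closed under direct summands and two-out-of-three
in conflations. -/
def IsThick (E : ExactStructure 𝒜) (S : Set 𝒜) : Prop :=
  (∀ {A B : 𝒜} (i : A ⟶ B) (r : B ⟶ A), i ≫ r = 𝟙 A → B ∈ S → A ∈ S) ∧
  (∀ {X Y Z : 𝒜} (i : X ⟶ Y) (d : Y ⟶ Z), E.conflation i d →
    ((X ∈ S → Y ∈ S → Z ∈ S) ∧ (X ∈ S → Z ∈ S → Y ∈ S) ∧ (Y ∈ S → Z ∈ S → X ∈ S)))


namespace ExAux

section basic

variable {E : ExactStructure 𝒜}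

lemma cmono {X Y Z : 𝒜} {i : X ⟶ Y} {d : Y ⟶ Z} (h : E.conflation i d) : Mono i := by
  obtain ⟨l⟩ := E.isKernel h
  exact ⟨fun a b hab => Fork.IsLimit.hom_ext l (by simpa using hab)⟩

lemma cepi {X Y Z : 𝒜} {i : X ⟶ Y} {d : Y ⟶ Z} (h : E.conflation i d) : Epi d := by
  obtain ⟨l⟩ := E.isCokernel h
  exact ⟨fun a b hab => Cofork.IsColimit.hom_ext l (by simpa using hab)⟩

lemma clift {X Y Z T : 𝒜} {i : X ⟶ Y} {d : Y ⟶ Z} (h : E.conflation i d) (x : T ⟶ Y)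
    (hx : x ≫ d = 0) : ∃ y : T ⟶ X, y ≫ i = x := by
  obtain ⟨l⟩ := E.isKernel h
  obtain ⟨y, hy⟩ := KernelFork.IsLimit.lift' l x hx
  exact ⟨y, by simpa using hy⟩

lemma cdesc {X Y Z T : 𝒜} {i : X ⟶ Y} {d : Y ⟶ Z} (h : E.conflation i d) (x : Y ⟶ T)
    (hx : i ≫ x = 0) : ∃ y : Z ⟶ T, d ≫ y = x := by
  obtain ⟨l⟩ := E.isCokernel h
  obtain ⟨y, hy⟩ := CokernelCofork.IsColimit.desc' l x hx
  exact ⟨y, by simpa using hy⟩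

lemma conf_of_ker {K Y Z : 𝒜} {k : K ⟶ Y} {d : Y ⟶ Z} (hd : IsDeflation E d)
    (hk : k ≫ d = 0) (hm : ∀ {T : 𝒜} (a : T ⟶ K), a ≫ k = 0 → a = 0)
    (hl : ∀ {T : 𝒜} (x : T ⟶ Y), x ≫ d = 0 → ∃ y : T ⟶ K, y ≫ k = x) : E.conflation k d := by
  obtain ⟨L, l, h⟩ := hd
  obtain ⟨a, ha⟩ := clift h k hk
  obtain ⟨b, hb⟩ := hl l (E.comp_zero h)
  have := cmono h
  have hab : a ≫ b = 𝟙 K := by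
    rw [← sub_eq_zero]; apply hm; simp [Preadditive.sub_comp, hb, ha]
  have hba : b ≫ a = 𝟙 L := by
    rw [← cancel_mono l]; simp [hb, ha]
  exact E.conflation_iso ⟨b, a, hba, hab⟩ (Iso.refl _) (Iso.refl _) h (by simp [hb]) (by simp)

lemma conf_of_coker {Q Y Z : 𝒜} {i : Z ⟶ Y} {q : Y ⟶ Q} (hd : IsInflation E i)
    (hk : i ≫ q = 0) (hm : ∀ {T : 𝒜} (a : Q ⟶ T), q ≫ a = 0 → a = 0)
    (hl : ∀ {T : 𝒜} (x : Y ⟶ T), i ≫ x = 0 → ∃ y : Q ⟶ T, q ≫ y = x) : E.conflation i q := by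
  obtain ⟨L, l, h⟩ := hd
  obtain ⟨a, ha⟩ := cdesc h q hk
  obtain ⟨b, hb⟩ := hl l (E.comp_zero h)
  have := cepi h
  have hba : b ≫ a = 𝟙 Q := by
    rw [← sub_eq_zero]; apply hm; simp [Preadditive.comp_sub, reassoc_of% hb, ha]
  have hab : a ≫ b = 𝟙 L := by
    rw [← cancel_epi l]; simp [hb, reassoc_of% ha]
  exact E.conflation_iso (Iso.refl _) (Iso.refl _) ⟨a, b, hab, hba⟩ h (by simp) (by simp [ha])

lemma conf_id_zero (hw : IsWIC E) (A : 𝒜) : E.conflation (𝟙 A) (0 : A ⟶ (0 : 𝒜)) := by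
  apply conf_of_ker (hw _ 0 ((isZero_zero 𝒜).eq_of_src _ _))
  · simp
  · intro T a h; simpa using h
  · intro T x _; exact ⟨x, by simp⟩

lemma conf_zero_id (A : 𝒜) : E.conflation (0 : (0 : 𝒜) ⟶ A) (𝟙 A) := E.id_deflation A

lemma conf_inl_snd (hw : IsWIC E) (A B : 𝒜) :
    E.conflation (biprod.inl : A ⟶ A ⊞ B) biprod.snd := by
  apply conf_of_ker (hw _ biprod.inr (by simp))
  · simp
  · intro T a h; simpa using h =≫ biprod.fst
  · intro T x hx; refine ⟨x ≫ biprod.fst, ?_⟩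
    apply biprod.hom_ext <;> simp [hx]

lemma conf_of_isPushout {X Y Z X' Y' : 𝒜} {i : X ⟶ Y} {d : Y ⟶ Z} (h : E.conflation i d)
    {f : X ⟶ X'} {f' : Y ⟶ Y'} {i' : X' ⟶ Y'} (hp : IsPushout i f f' i') :
    ∃ d' : Y' ⟶ Z, E.conflation i' d' ∧ f' ≫ d' = d := by
  obtain ⟨Y₂, f₂, i₂, Q, q, hp₂, hc⟩ := E.pushout_inflation h f
  have hinf : IsInflation E i' := by
    let e := hp₂.isoIsPushout _ _ hp
    refine ⟨Q, e.inv ≫ q, E.conflation_iso (Iso.refl _) e (Iso.refl _) hc ?_ ?_⟩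
    · simp [e]
    · simp
  have := cepi h
  have hz : i ≫ d = f ≫ 0 := by simp [E.comp_zero h]
  refine ⟨hp.desc d 0 hz, conf_of_coker hinf (by simp) ?_ ?_, by simp⟩
  · intro T a ha
    rw [← cancel_epi d]
    simpa using f' ≫= ha
  · intro T x hx
    obtain ⟨y, hy⟩ := cdesc h (f' ≫ x) (by rw [hp.w_assoc, hx, comp_zero])
    refine ⟨y, hp.hom_ext ?_ ?_⟩ <;> simp [hy, hx]

lemma conf_of_isPullback {X Y Z Y' Z' : 𝒜} {i : X ⟶ Y} {d : Y ⟶ Z} (h : E.conflation i d)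
    {f : Z' ⟶ Z} {f' : Y' ⟶ Y} {d' : Y' ⟶ Z'} (hp : IsPullback f' d' d f) :
    ∃ i' : X ⟶ Y', E.conflation i' d' ∧ i' ≫ f' = i := by
  obtain ⟨Y₂, f₂, d₂, Q, q, hp₂, hc⟩ := E.pullback_deflation h f
  have hinf : IsDeflation E d' := by
    let e := hp₂.isoIsPullback _ _ hp
    refine ⟨Q, q ≫ e.hom, E.conflation_iso (Iso.refl _) e (Iso.refl _) hc ?_ ?_⟩
    · simp
    · simp [e]
  have := cmono h
  have hz : i ≫ d = 0 ≫ f := by simp [E.comp_zero h]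
  refine ⟨hp.lift i 0 hz, conf_of_ker hinf (by simp) ?_ ?_, by simp⟩
  · intro T a ha
    rw [← cancel_mono i]
    simpa using ha =≫ f'
  · intro T x hx
    obtain ⟨y, hy⟩ := clift h (x ≫ f') (by rw [Category.assoc, hp.w, reassoc_of% hx, zero_comp])
    refine ⟨y, hp.hom_ext ?_ ?_⟩ <;> simp [hy, hx]

/-- existence of pushout with the conflation -/
lemma exists_po {X Y Z X' : 𝒜} {i : X ⟶ Y} {d : Y ⟶ Z} (h : E.conflation i d) (f : X ⟶ X') :
    ∃ (Y' : 𝒜) (f' : Y ⟶ Y') (i' : X' ⟶ Y') (d' : Y' ⟶ Z), IsPushout i f f' i' ∧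
      E.conflation i' d' ∧ f' ≫ d' = d := by
  obtain ⟨Y₂, f₂, i₂, Q, q, hp₂, hc⟩ := E.pushout_inflation h f
  obtain ⟨d', h1, h2⟩ := conf_of_isPushout h hp₂
  exact ⟨_, _, _, d', hp₂, h1, h2⟩

lemma exists_pb {X Y Z Z' : 𝒜} {i : X ⟶ Y} {d : Y ⟶ Z} (h : E.conflation i d) (f : Z' ⟶ Z) :
    ∃ (Y' : 𝒜) (f' : Y' ⟶ Y) (d' : Y' ⟶ Z') (i' : X ⟶ Y'), IsPullback f' d' d f ∧
      E.conflation i' d' ∧ i' ≫ f' = i := by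
  obtain ⟨Y₂, f₂, i₂, Q, q, hp₂, hc⟩ := E.pullback_deflation h f
  obtain ⟨d', h1, h2⟩ := conf_of_isPullback h hp₂
  exact ⟨_, _, _, d', hp₂, h1, h2⟩

lemma defl_comp {A B C : 𝒜} {f : A ⟶ B} {g : B ⟶ C} (hf : IsDeflation E f)
    (hg : IsDeflation E g) : IsDeflation E (f ≫ g) := by
  obtain ⟨_, _, h1⟩ := hf
  obtain ⟨_, _, h2⟩ := hg
  exact E.deflation_comp h1 h2

lemma isPullback_map_id {A B C : 𝒜} (h : A ⟶ C) :
    IsPullback (biprod.snd : B ⊞ A ⟶ A) (biprod.map (𝟙 B) h) h (biprod.snd : B ⊞ C ⟶ C) := by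
  refine ⟨⟨by simp⟩, ⟨PullbackCone.IsLimit.mk _
    (fun s => biprod.lift (s.snd ≫ biprod.fst) s.fst) ?_ ?_ ?_⟩⟩
  · intro s; simp
  · intro s
    apply biprod.hom_ext
    · simp
    · simp [s.condition]
  · intro s m h1 h2
    apply biprod.hom_ext
    · simpa using h2 =≫ biprod.fst
    · simpa using h1

lemma isPullback_map_id' {A B C : 𝒜} (h : A ⟶ C) :
    IsPullback (biprod.fst : A ⊞ B ⟶ A) (biprod.map h (𝟙 B)) h (biprod.fst : C ⊞ B ⟶ C) := by
  refine ⟨⟨by simp⟩, ⟨PullbackCone.IsLimit.mk _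
    (fun s => biprod.lift s.fst (s.snd ≫ biprod.snd)) ?_ ?_ ?_⟩⟩
  · intro s; simp
  · intro s
    apply biprod.hom_ext
    · simp [s.condition]
    · simp
  · intro s m h1 h2
    apply biprod.hom_ext
    · simpa using h1
    · simpa using h2 =≫ biprod.snd

lemma defl_desc (hw : IsWIC E) {A B C : 𝒜} (f : B ⟶ C) {h : A ⟶ C} (hh : IsDeflation E h) :
    IsDeflation E (biprod.desc f h) := by
  obtain ⟨_, _, hc⟩ := hh
  obtain ⟨_, h1, _⟩ := conf_of_isPullback hc (isPullback_map_id (B := B) h)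
  have h2 : IsDeflation E (biprod.desc f (𝟙 C)) := hw _ biprod.inr (by simp)
  have := defl_comp ⟨_, _, h1⟩ h2
  convert this using 1
  apply biprod.hom_ext' <;> simp

/-- in the weakly idempotent complete case, `g ≫ f` deflation implies `f` deflation. -/
lemma defl_of_comp (hw : IsWIC E) {A B C : 𝒜} (g : A ⟶ B) (f : B ⟶ C)
    (hgf : IsDeflation E (g ≫ f)) : IsDeflation E f := by
  -- (f, 0) is a deflation
  have h1 : IsDeflation E (biprod.desc f (g ≫ f)) := defl_desc hw f hgf
  have h2 : IsDeflation E (biprod.desc f (0 : A ⟶ C)) := by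
    have h3 : IsDeflation E (biprod.lift (biprod.fst - biprod.snd ≫ g) biprod.snd :
        B ⊞ A ⟶ B ⊞ A) := by
      refine hw _ (biprod.lift (biprod.fst + biprod.snd ≫ g) biprod.snd) ?_
      apply biprod.hom_ext <;> simp
    have := defl_comp h3 h1
    convert this using 1
    apply biprod.hom_ext' <;> simp
  obtain ⟨N, n, hn⟩ := h2
  obtain ⟨a, ha⟩ := clift hn (biprod.inr : A ⟶ B ⊞ A) (by simp)
  obtain ⟨K, k, hk⟩ := hw (n ≫ biprod.snd) a (by rw [reassoc_of% ha]; simp)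
  obtain ⟨π, hπ⟩ := clift hk (𝟙 N - (n ≫ biprod.snd) ≫ a) (by
    simp [Preadditive.sub_comp, reassoc_of% ha])
  have := cmono hk
  have hkz := E.comp_zero hk
  have hkπ : k ≫ π = 𝟙 K := by
    rw [← cancel_mono k]
    simp [hπ, Preadditive.comp_sub, reassoc_of% hkz]
  have haπ : a ≫ π = 0 := by
    rw [← cancel_mono k]
    simp [hπ, Preadditive.comp_sub, reassoc_of% ha]
  have hpo : IsPushout n π biprod.fst (k ≫ n ≫ biprod.fst) := by
    refine ⟨⟨?_⟩, ⟨PushoutCocone.IsColimit.mk _ (fun s => biprod.inl ≫ s.inl) ?_ ?_ ?_⟩⟩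
    · rw [reassoc_of% hπ]; simp [Preadditive.sub_comp, reassoc_of% ha]
    · intro s
      apply biprod.hom_ext'
      · simp
      · have := a ≫= s.condition
        rw [reassoc_of% ha, reassoc_of% haπ] at this
        simp [this]
    · intro s
      have h0 : biprod.inr ≫ s.inl = 0 := by
        have := a ≫= s.condition
        rw [reassoc_of% ha, reassoc_of% haπ] at this
        simp [this]
      have e : s.inl = biprod.fst ≫ biprod.inl ≫ s.inl := by
        apply biprod.hom_ext' <;> simp [h0]
      have := k ≫= s.condition
      rw [reassoc_of% hkπ] at this
      simp only [Category.assoc]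
      rw [← e, this]
    · intro s m h1 h2
      simpa using biprod.inl ≫= h1
  obtain ⟨d', h3, h4⟩ := conf_of_isPushout hn hpo
  have : d' = f := by simpa using biprod.inl ≫= h4
  exact ⟨_, _, this ▸ h3⟩

lemma conf_po (hw : IsWIC E) {A B C A' B' : 𝒜} {i : A ⟶ B} {d : B ⟶ C} (h : E.conflation i d)
    {f : A ⟶ A'} {f' : B ⟶ B'} {i' : A' ⟶ B'} (hp : IsPushout i f f' i') :
    E.conflation (biprod.lift i (-f)) (biprod.desc f' i') := by
  obtain ⟨d', h1, h2⟩ := conf_of_isPushout h hp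
  obtain ⟨P, p1, p2, k, hpb, hk, -⟩ := exists_pb h d'
  have hw' := hpb.w
  obtain ⟨y, hy⟩ := clift h1 (p2 - p1 ≫ f') (by
    simp [Preadditive.sub_comp, h2, hw'])
  have hd : IsDeflation E (biprod.desc f' i') := by
    apply defl_of_comp hw (biprod.lift p1 y)
    have : biprod.lift p1 y ≫ biprod.desc f' i' = p2 := by
      simp [hy]
    rw [this]; exact ⟨_, _, hk⟩
  have := cmono h
  have := cmono h1
  apply conf_of_ker hd
  · simp [hp.w]
  · intro T a ha
    rw [← cancel_mono i]
    simpa using ha =≫ biprod.fst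
  · intro T x hx
    have hx' : (x ≫ biprod.fst) ≫ f' + (x ≫ biprod.snd) ≫ i' = 0 := by
      rw [← hx, biprod.desc_eq]; simp
    have hxd := hx' =≫ d'
    simp [h2, E.comp_zero h1] at hxd
    obtain ⟨z, hz⟩ := clift h (x ≫ biprod.fst) (by simpa using hxd)
    refine ⟨z, ?_⟩
    apply biprod.hom_ext
    · simp [hz]
    · rw [← hz] at hx'
      rw [← cancel_mono i']
      simp only [Category.assoc, hp.w] at hx'
      simp
      rw [eq_comm, ← add_eq_zero_iff_eq_neg, add_comm]
      exact hx'

lemma infl_comp (hw : IsWIC E) {A B C A' C' : 𝒜} {i : A ⟶ B} {p : B ⟶ A'} {j : B ⟶ C}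
    {q : C ⟶ C'} (hi : E.conflation i p) (hj : E.conflation j q) :
    ∃ (D : 𝒜) (f' : C ⟶ D) (j' : A' ⟶ D) (q' : D ⟶ C'),
      E.conflation (i ≫ j) f' ∧ E.conflation j' q' ∧ j ≫ f' = p ≫ j' ∧ f' ≫ q' = q := by
  obtain ⟨D, f', j', q', hp, h1, h2⟩ := exists_po hj p
  have h3 := conf_po hw hj hp
  have hd : IsDeflation E f' := by
    obtain ⟨_, h4, _⟩ := conf_of_isPullback hi (isPullback_map_id (B := C) p)
    have h5 := defl_comp ⟨_, _, h4⟩ ⟨_, _, h3⟩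
    apply defl_of_comp hw (biprod.desc (𝟙 C) j)
    convert h5 using 1
    apply biprod.hom_ext' <;> simp [hp.w]
  have := cmono hi
  have := cmono hj
  refine ⟨D, f', j', q', conf_of_ker hd ?_ ?_ ?_, h1, hp.w, h2⟩
  · rw [Category.assoc, hp.w, reassoc_of% (E.comp_zero hi), zero_comp]
  · intro T a ha
    rw [← cancel_mono i, ← cancel_mono j]
    simpa using ha
  · intro T x hx
    obtain ⟨y, hy⟩ := clift h3 (biprod.lift x 0) (by simp [hx])
    have hy1 := hy =≫ biprod.fst
    have hy2 := hy =≫ biprod.snd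
    simp at hy1 hy2
    obtain ⟨z, hz⟩ := clift hi y hy2
    exact ⟨z, by rw [reassoc_of% hz, hy1]⟩

lemma infl_of_comp (hw : IsWIC E) {A B C : 𝒜} (g : A ⟶ B) (φ : B ⟶ C)
    (h : IsInflation E (g ≫ φ)) : IsInflation E g := by
  obtain ⟨Q, q, hq⟩ := h
  have := cmono hq
  -- A → A ⊞ B → C ⊞ B
  have h1 : E.conflation (biprod.lift (𝟙 A) g) (biprod.desc (-g) (𝟙 B)) := by
    apply conf_of_ker (hw _ biprod.inr (by simp))
    · simp
    · intro T a ha; simpa using ha =≫ biprod.fst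
    · intro T x hx
      refine ⟨x ≫ biprod.fst, ?_⟩
      rw [biprod.desc_eq] at hx
      simp at hx
      apply biprod.hom_ext
      · simp
      · simp
        rw [eq_comm, ← sub_eq_zero, sub_eq_neg_add, hx]
  have h2 : E.conflation (biprod.map (g ≫ φ) (𝟙 B)) (biprod.fst ≫ q) := by
    apply conf_of_ker (defl_comp (hw _ biprod.inl (by simp)) ⟨_, _, hq⟩)
    · have := E.comp_zero hq
      simp at this
      simp [this]
    · intro T a ha
      apply biprod.hom_ext
      · rw [← cancel_mono (g ≫ φ)]
        simpa using ha =≫ biprod.fst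
      · simpa using ha =≫ biprod.snd
    · intro T x hx
      obtain ⟨y, hy⟩ := clift hq (x ≫ biprod.fst) (by simpa using hx)
      refine ⟨biprod.lift y (x ≫ biprod.snd), ?_⟩
      apply biprod.hom_ext <;> simp [hy]
  obtain ⟨D, f', _, _, h3, -⟩ := infl_comp hw h1 h2
  -- shear
  have h4 : ∃ f'' : C ⊞ B ⟶ D, E.conflation (biprod.lift (0 : A ⟶ C) g) f'' := by
    let e : C ⊞ B ≅ C ⊞ B :=
      ⟨biprod.lift (biprod.fst - biprod.snd ≫ φ) biprod.snd,
       biprod.lift (biprod.fst + biprod.snd ≫ φ) biprod.snd,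
       by apply biprod.hom_ext <;> simp, by apply biprod.hom_ext <;> simp⟩
    refine ⟨e.inv ≫ f', E.conflation_iso (Iso.refl _) e (Iso.refl _) h3 ?_ ?_⟩
    · apply biprod.hom_ext <;> simp [e, Preadditive.comp_sub]
    · simp
  obtain ⟨n, hn⟩ := h4
  obtain ⟨r, hr⟩ := cdesc hn (biprod.fst : C ⊞ B ⟶ C) (by simp)
  obtain ⟨K, k, hk⟩ := hw r (biprod.inl ≫ n) (by simp [hr])
  obtain ⟨b, hb⟩ := clift hk (biprod.inr ≫ n) (by simp [hr])
  have := cmono hk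
  have hpb : IsPullback biprod.inr b n k := by
    refine ⟨⟨hb.symm⟩, ⟨PullbackCone.IsLimit.mk _ (fun s => s.fst ≫ biprod.snd) ?_ ?_ ?_⟩⟩
    · intro s
      have := s.condition =≫ r
      simp [hr, E.comp_zero hk] at this
      apply biprod.hom_ext <;> simp [this]
    · intro s
      have h5 := s.condition =≫ r
      simp [hr, E.comp_zero hk] at h5
      have h6 : s.fst = s.fst ≫ biprod.snd ≫ biprod.inr := by
        apply biprod.hom_ext <;> simp [h5]
      rw [← cancel_mono k, ← s.condition]
      simp only [Category.assoc, hb]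
      conv_rhs => rw [h6]
      simp
    · intro s m h1 h2
      rw [← h1]; simp
  obtain ⟨i', h5, h6⟩ := conf_of_isPullback hn hpb
  have : i' = g := by simpa using h6 =≫ biprod.snd
  exact ⟨_, _, this ▸ h5⟩

/-- composition of conflations on the deflation side -/
lemma conf_comp {K₁ K₂ A B C : 𝒜} {k₁ : K₁ ⟶ A} {d₁ : A ⟶ B} {k₂ : K₂ ⟶ B} {d₂ : B ⟶ C}
    (h₁ : E.conflation k₁ d₁) (h₂ : E.conflation k₂ d₂) :
    ∃ (K : 𝒜) (k : K ⟶ A) (a : K₁ ⟶ K) (b : K ⟶ K₂), E.conflation k (d₁ ≫ d₂) ∧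
      E.conflation a b ∧ a ≫ k = k₁ ∧ k ≫ d₁ = b ≫ k₂ := by
  obtain ⟨K, k, hk⟩ := E.deflation_comp h₁ h₂
  have hz := E.comp_zero hk
  obtain ⟨b, hb⟩ := clift h₂ (k ≫ d₁) (by simpa using hz)
  have := cmono hk
  have := cmono h₂
  have hpb : IsPullback k b d₁ k₂ := by
    have ex : ∀ s : PullbackCone d₁ k₂, ∃ y, y ≫ k = s.fst := fun s =>
      clift hk s.fst (by rw [← Category.assoc, s.condition, Category.assoc, E.comp_zero h₂,
        comp_zero])
    refine ⟨⟨hb.symm⟩, ⟨PullbackCone.IsLimit.mk _ (fun s => (ex s).choose) ?_ ?_ ?_⟩⟩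
    · intro s; exact (ex s).choose_spec
    · intro s
      rw [← cancel_mono k₂, Category.assoc, hb, ← s.condition, ← Category.assoc,
        (ex s).choose_spec]
    · intro s m h1 h2
      rw [← cancel_mono k, h1, (ex s).choose_spec]
  obtain ⟨a, ha, ha'⟩ := conf_of_isPullback h₁ hpb
  exact ⟨K, k, a, b, hk, ha, ha', hb.symm⟩

end basic

end ExAux

namespace ExAux

section ext

variable {E : ExactStructure 𝒜}

/-- Maps extend along an inflation if `Ext¹` vanishes. -/
lemma ext_extend {A B C K : 𝒜} {i : A ⟶ B} {q : B ⟶ C} (h : E.conflation i q)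
    (hE : Ext1IsZero E C K) (r : A ⟶ K) : ∃ r' : B ⟶ K, i ≫ r' = r := by
  obtain ⟨M, f', i', d', hp, h1, -⟩ := exists_po h r
  obtain ⟨s, hs⟩ := hE i' d' h1
  exact ⟨f' ≫ s, by rw [hp.w_assoc, hs, Category.comp_id]⟩

lemma lifting_aux {A B C K M : 𝒜} {i : A ⟶ B} {q : B ⟶ C} (h : E.conflation i q)
    {k : K ⟶ M} {p : M ⟶ B} (hp : E.conflation k p) (hE : Ext1IsZero E C K)
    (a : A ⟶ M) (ha : a ≫ p = i) : ∃ s : B ⟶ M, i ≫ s = a ∧ s ≫ p = 𝟙 B := by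
  obtain ⟨N, n, hn⟩ := E.deflation_comp hp h
  have hnz := E.comp_zero hn
  have := cmono hp
  have := cmono h
  have := cepi hp
  have hkp := E.comp_zero hp
  have hiq := E.comp_zero h
  obtain ⟨α, hα⟩ := clift h (n ≫ p) (by simpa using hnz)
  obtain ⟨r, hr⟩ := clift hp (n - α ≫ a) (by simp [Preadditive.sub_comp, ha, hα])
  obtain ⟨κ, hκ⟩ := clift hn k (by rw [reassoc_of% hkp, zero_comp])
  obtain ⟨l, hl⟩ := clift hn a (by rw [reassoc_of% ha, hiq])
  have hκα : κ ≫ α = 0 := by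
    rw [← cancel_mono i]; simp [hα, reassoc_of% hκ, hkp]
  have hlα : l ≫ α = 𝟙 A := by
    rw [← cancel_mono i]; simp [hα, reassoc_of% hl, ha]
  have hκr : κ ≫ r = 𝟙 K := by
    rw [← cancel_mono k]; simp [hr, Preadditive.comp_sub, hκ, reassoc_of% hκα]
  have hlr : l ≫ r = 0 := by
    rw [← cancel_mono k]; simp [hr, Preadditive.comp_sub, hl, reassoc_of% hlα]
  obtain ⟨r', hr'⟩ := ext_extend hn hE r
  have hkr' : k ≫ r' = 𝟙 K := by rw [← hκ, Category.assoc, hr', hκr]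
  have har' : a ≫ r' = 0 := by rw [← hl, Category.assoc, hr', hlr]
  obtain ⟨s, hs⟩ := cdesc hp (𝟙 M - r' ≫ k) (by
    simp [Preadditive.comp_sub, reassoc_of% hkr'])
  refine ⟨s, ?_, ?_⟩
  · rw [← ha, Category.assoc, hs]; simp [Preadditive.comp_sub, reassoc_of% har']
  · rw [← cancel_epi p, reassoc_of% hs]; simp [Preadditive.sub_comp, hkp]

lemma lifting {A B C K M N : 𝒜} {i : A ⟶ B} {q : B ⟶ C} (h : E.conflation i q)
    {k : K ⟶ M} {p : M ⟶ N} (hp : E.conflation k p) (hE : Ext1IsZero E C K)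
    (a : A ⟶ M) (b : B ⟶ N) (hab : a ≫ p = i ≫ b) :
    ∃ s : B ⟶ M, i ≫ s = a ∧ s ≫ p = b := by
  obtain ⟨M', f', p', k', hpb, h1, h2⟩ := exists_pb hp b
  obtain ⟨s, hs1, hs2⟩ := lifting_aux h h1 hE (hpb.lift a i hab) (by simp)
  refine ⟨s ≫ f', ?_, ?_⟩
  · rw [reassoc_of% hs1]; simp
  · rw [Category.assoc, hpb.w, reassoc_of% hs2]

lemma ext_lift {C K M N : 𝒜} {k : K ⟶ M} {p : M ⟶ N} (hp : E.conflation k p)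
    (hE : Ext1IsZero E C K) (b : C ⟶ N) : ∃ s : C ⟶ M, s ≫ p = b := by
  obtain ⟨s, -, hs⟩ := lifting (conf_zero_id C) hp hE 0 b (by simp)
  exact ⟨s, hs⟩

lemma retr_of_sec {A B C : 𝒜} {i : A ⟶ B} {q : B ⟶ C} (h : E.conflation i q) (s : C ⟶ B)
    (hs : s ≫ q = 𝟙 C) : ∃ r : B ⟶ A, i ≫ r = 𝟙 A ∧ s ≫ r = 0 ∧ r ≫ i + q ≫ s = 𝟙 B := by
  have := cmono h
  obtain ⟨r, hr⟩ := clift h (𝟙 B - q ≫ s) (by simp [Preadditive.sub_comp, hs])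
  refine ⟨r, ?_, ?_, ?_⟩
  · rw [← cancel_mono i]; simp [hr, Preadditive.comp_sub, reassoc_of% (E.comp_zero h)]
  · rw [← cancel_mono i]; simp [hr, Preadditive.comp_sub, reassoc_of% hs]
  · simp [hr]

lemma sec_of_retr {A B C : 𝒜} {i : A ⟶ B} {q : B ⟶ C} (h : E.conflation i q) (r : B ⟶ A)
    (hr : i ≫ r = 𝟙 A) : ∃ s : C ⟶ B, s ≫ q = 𝟙 C := by
  have := cepi h
  obtain ⟨s, hs⟩ := cdesc h (𝟙 B - r ≫ i) (by simp [Preadditive.comp_sub, reassoc_of% hr])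
  refine ⟨s, ?_⟩
  rw [← cancel_epi q, reassoc_of% hs]; simp [Preadditive.sub_comp, E.comp_zero h]

lemma ext_of_sec {A B : 𝒜} (H : ∀ {M : 𝒜} (i : B ⟶ M) (d : M ⟶ A), E.conflation i d →
    ∃ s : A ⟶ M, s ≫ d = 𝟙 A) : Ext1IsZero E A B := by
  intro M i d h
  obtain ⟨s, hs⟩ := H i d h
  obtain ⟨r, hr, -⟩ := retr_of_sec h s hs
  exact ⟨r, hr⟩

lemma X_ext {X Y : Set 𝒜} (hc : IsCotorsionPair E X Y) {A M C : 𝒜} {i : A ⟶ M} {q : M ⟶ C}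
    (h : E.conflation i q) (hA : A ∈ X) (hC : C ∈ X) : M ∈ X := by
  rw [hc.1]
  intro B hB
  apply ext_of_sec
  intro N j d hd
  obtain ⟨a, ha⟩ := ext_lift hd ((hc.1 A).1 hA B hB) i
  obtain ⟨s, -, hs⟩ := lifting_aux h hd ((hc.1 C).1 hC B hB) a ha
  exact ⟨s, hs⟩

lemma Y_ext {X Y : Set 𝒜} (hc : IsCotorsionPair E X Y) {A M C : 𝒜} {i : A ⟶ M} {q : M ⟶ C}
    (h : E.conflation i q) (hA : A ∈ Y) (hC : C ∈ Y) : M ∈ Y := by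
  rw [hc.2]
  intro B hB N j d hd
  obtain ⟨l, hl⟩ := ext_extend hd ((hc.2 C).1 hC B hB) q
  obtain ⟨s, hs, -⟩ := lifting hd h ((hc.2 A).1 hA B hB) (𝟙 M) l (by simp [hl])
  exact ⟨s, hs⟩

/-- `Y` closed under cokernels of inflations implies `X` closed under kernels of deflations. -/
lemma X_ker (hw : IsWIC E) {X Y : Set 𝒜} (hX : AdditivelyClosed X)
    (hc : IsCotorsionPair E X Y) (hcc : IsCompleteCP E X Y)
    (hYc : ∀ {K A B : 𝒜} (i : K ⟶ A) (d : A ⟶ B), E.conflation i d → K ∈ Y → A ∈ Y → B ∈ Y)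
    {K A B : 𝒜} (i : K ⟶ A) (d : A ⟶ B) (h : E.conflation i d) (hA : A ∈ X) (hB : B ∈ X) :
    K ∈ X := by
  obtain ⟨W, X₁, w, dw, hW, hX₁, hWY⟩ := (hcc K).2
  have hWX : W ∈ X := by
    obtain ⟨Q, f', i', d', hp, h1, h2⟩ := exists_po h w
    obtain ⟨d'', h3, h4⟩ := conf_of_isPushout hW hp.flip
    have hQ := X_ext hc h3 hA hX₁
    obtain ⟨r, hr⟩ := (hc.1 B).1 hB W hWY i' d' h1
    exact hX.2.2.2 i' r hr hQ
  obtain ⟨Y₀, X₀, i₀, p, h₀, hX₀, hY₀⟩ := (hcc K).1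
  obtain ⟨Y₂, X₂, j, q, h₂, hX₂, hY₂⟩ := (hcc X₀).2
  obtain ⟨D, f', j', q', h3, h4, h5, h6⟩ := infl_comp hw h₀ h₂
  have hD : D ∈ Y := hYc _ _ h3 hY₀ hY₂
  obtain ⟨v, hv⟩ := ext_extend hW ((hc.1 _).1 hX₁ D hD) j'
  obtain ⟨v', hv'⟩ := ext_lift h3 ((hc.1 _).1 hWX Y₀ hY₀) v
  have hu : (w ≫ v') ≫ f' = j' := by rw [Category.assoc, hv', hv]
  obtain ⟨s, hs⟩ := clift h₂ (w ≫ v') (by rw [← h6, ← Category.assoc, hu, E.comp_zero h4])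
  have := cmono h4
  have hsp : s ≫ p = 𝟙 K := by
    rw [← cancel_mono j', Category.assoc, ← h5, reassoc_of% hs, ← Category.assoc, hu,
      Category.id_comp]
  exact hX.2.2.2 s p hsp hX₀

/-- `Y` closed under kernels of deflations. -/
lemma Y_ker {X Y : Set 𝒜} (hY : AdditivelyClosed Y)
    (hc : IsCotorsionPair E X Y) (hcc : IsCompleteCP E X Y)
    (hP : ∀ P, P ∈ X → P ∈ Y → IsProjObj E P)
    {K A B : 𝒜} (i : K ⟶ A) (d : A ⟶ B) (h : E.conflation i d) (hA : A ∈ Y) (hB : B ∈ Y) :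
    K ∈ Y := by
  obtain ⟨W, X₁, w, dw, hW, hX₁, hWY⟩ := (hcc K).2
  obtain ⟨Q, f', i', d', hp, h1, h2⟩ := exists_po h w
  obtain ⟨d'', h3, h4⟩ := conf_of_isPushout hW hp.flip
  have hQ := Y_ext hc h1 hWY hB
  obtain ⟨r, hr⟩ := (hc.1 X₁).1 hX₁ A hA _ _ h3
  obtain ⟨s, hs⟩ := sec_of_retr h3 r hr
  have hX₁Y : X₁ ∈ Y := hY.2.2.2 s d'' hs hQ
  obtain ⟨s', hs'⟩ := hP _ hX₁ hX₁Y dw ⟨_, _, hW⟩ (𝟙 X₁)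
  obtain ⟨r', hr', -⟩ := retr_of_sec hW s' hs'
  exact hY.2.2.2 w r' hr' hWY

end ext

section weq

variable {E : ExactStructure 𝒜}

lemma conf_desc (hw : IsWIC E) {K A B W : 𝒜} {k : K ⟶ A} {d : A ⟶ B} (h : E.conflation k d)
    (s : W ⟶ A) (t : W ⟶ B) (ht : s ≫ d = t) :
    E.conflation (biprod.desc (biprod.lift k 0) (biprod.lift (-s) (𝟙 W)) : K ⊞ W ⟶ A ⊞ W)
      (biprod.desc d t) := by
  have := cmono h
  apply conf_of_ker
  · apply defl_of_comp hw biprod.inl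
    simpa using ⟨_, _, h⟩
  · apply biprod.hom_ext' <;> simp [E.comp_zero h, ht]
  · intro T a ha
    have h2 : a ≫ biprod.snd = 0 := by
      have := ha =≫ biprod.snd
      simpa [biprod.desc_eq] using this
    apply biprod.hom_ext
    · have := ha =≫ biprod.fst
      simp [biprod.desc_eq, reassoc_of% h2] at this
      rw [← cancel_mono k]
      simpa using this
    · simpa using h2
  · intro T x hx
    rw [biprod.desc_eq] at hx
    simp at hx
    obtain ⟨z, hz⟩ := clift h (x ≫ biprod.fst + x ≫ biprod.snd ≫ s) (by simp [ht, hx])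
    refine ⟨biprod.lift z (x ≫ biprod.snd), ?_⟩
    apply biprod.hom_ext <;> simp [hz]

lemma ker_retract {K M B K' M' B' : 𝒜} {k : K ⟶ M} {d : M ⟶ B} (h : E.conflation k d)
    {k' : K' ⟶ M'} {d' : M' ⟶ B'} (h' : E.conflation k' d') (α : M ⟶ M') (β : M' ⟶ M)
    (γ : B ⟶ B') (δ : B' ⟶ B) (hαβ : α ≫ β = 𝟙 M) (h1 : d ≫ γ = α ≫ d')
    (h2 : d' ≫ δ = β ≫ d) : ∃ (a : K ⟶ K') (b : K' ⟶ K), a ≫ b = 𝟙 K := by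
  have := cmono h
  obtain ⟨a, ha⟩ := clift h' (k ≫ α) (by
    rw [Category.assoc, ← h1, reassoc_of% (E.comp_zero h), zero_comp])
  obtain ⟨b, hb⟩ := clift h (k' ≫ β) (by
    rw [Category.assoc, ← h2, reassoc_of% (E.comp_zero h'), zero_comp])
  refine ⟨a, b, ?_⟩
  rw [← cancel_mono k]
  simp [hb, reassoc_of% ha, hαβ]

lemma weq_retract (hw : IsWIC E) {ω Y : Set 𝒜} (hY : AdditivelyClosed Y)
    (hω : ∀ P ∈ ω, IsProjObj E P) (hωY : ∀ P ∈ ω, P ∈ Y)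
    {A B A' B' : 𝒜} {f : A ⟶ B} {g : A' ⟶ B'} (hf : WeqO E ω Y f) (hr : IsRetractMor g f)
    {P K : 𝒜} (hP : P ∈ ω) {t : P ⟶ B'} {k : K ⟶ A' ⊞ P}
    (hk : E.conflation k (biprod.desc g t)) : K ∈ Y := by
  obtain ⟨W, hW, s, L, l, hl, hL⟩ := hf
  obtain ⟨φ₁, ψ₁, φ₂, ψ₂, e1, e2, e3, e4⟩ := hr
  obtain ⟨u, hu⟩ := hω P hP _ ⟨_, _, hl⟩ (t ≫ φ₂)
  have h1 := conf_desc hw hl u _ hu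
  obtain ⟨v, hv⟩ := hω W hW _ ⟨_, _, hk⟩ (s ≫ ψ₂)
  obtain ⟨a, b, hab⟩ := ker_retract hk h1
    (biprod.desc (φ₁ ≫ biprod.inl ≫ biprod.inl) biprod.inr)
    (biprod.desc (biprod.desc (ψ₁ ≫ biprod.inl) v) biprod.inr) φ₂ ψ₂
    (by apply biprod.hom_ext' <;> simp [reassoc_of% e1])
    (by apply biprod.hom_ext' <;> simp [e3])
    (by
      apply biprod.hom_ext'
      · apply biprod.hom_ext' <;> simp [e4, hv]
      · simp [e2])
  exact hY.2.2.2 a b hab (hY.2.1 _ _ hL (hωY P hP))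

lemma retract_refl {A B : 𝒜} (f : A ⟶ B) : IsRetractMor f f :=
  ⟨𝟙 _, 𝟙 _, 𝟙 _, 𝟙 _, by simp, by simp, by simp, by simp⟩

lemma weq_indep (hw : IsWIC E) {ω Y : Set 𝒜} (hY : AdditivelyClosed Y)
    (hω : ∀ P ∈ ω, IsProjObj E P) (hωY : ∀ P ∈ ω, P ∈ Y)
    {A B : 𝒜} {f : A ⟶ B} (hf : WeqO E ω Y f)
    {P K : 𝒜} (hP : P ∈ ω) {t : P ⟶ B} {k : K ⟶ A ⊞ P}
    (hk : E.conflation k (biprod.desc f t)) : K ∈ Y :=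
  weq_retract hw hY hω hωY hf (retract_refl f) hP hk

lemma weq_of_conf (hw : IsWIC E) {ω Y : Set 𝒜} (hY : AdditivelyClosed Y) (h0 : (0 : 𝒜) ∈ ω)
    {K A B : 𝒜} {k : K ⟶ A} {f : A ⟶ B} (h : E.conflation k f) (hK : K ∈ Y) : WeqO E ω Y f :=
  ⟨0, h0, 0, _, _, conf_desc hw h 0 0 (by simp), hY.2.1 _ _ hK hY.1⟩

lemma ker_of_weq (hw : IsWIC E) {ω Y : Set 𝒜} (hY : AdditivelyClosed Y) (h0 : (0 : 𝒜) ∈ ω)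
    (hω : ∀ P ∈ ω, IsProjObj E P) (hωY : ∀ P ∈ ω, P ∈ Y)
    {K A B : 𝒜} {k : K ⟶ A} {f : A ⟶ B} (h : E.conflation k f) (hf : WeqO E ω Y f) : K ∈ Y := by
  have := weq_indep hw hY hω hωY hf h0 (conf_desc hw h 0 0 (by simp))
  exact hY.2.2.2 biprod.inl biprod.fst (by simp) this

lemma isPullback_aux {A P Q B : 𝒜} (f : A ⟶ B) (t : P ⟶ B) :
    IsPullback (biprod.desc biprod.inl (biprod.fst ≫ biprod.inr) : A ⊞ (P ⊞ Q) ⟶ A ⊞ P)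
      (biprod.desc (f ≫ biprod.inl) (biprod.map t (𝟙 Q)) : A ⊞ (P ⊞ Q) ⟶ B ⊞ Q)
      (biprod.desc f t) biprod.fst := by
  refine ⟨⟨?_⟩, ⟨PullbackCone.IsLimit.mk _
    (fun s => biprod.lift (s.fst ≫ biprod.fst)
      (biprod.lift (s.fst ≫ biprod.snd) (s.snd ≫ biprod.snd))) ?_ ?_ ?_⟩⟩
  · apply biprod.hom_ext'
    · simp
    · apply biprod.hom_ext' <;> simp
  · intro s
    apply biprod.hom_ext <;> simp [biprod.desc_eq]
  · intro s
    have gen : ∀ {T : 𝒜} (x : T ⟶ A ⊞ P), x ≫ biprod.desc f t =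
        x ≫ biprod.fst ≫ f + x ≫ biprod.snd ≫ t := fun x => by simp [biprod.desc_eq]
    have := (gen s.fst).symm.trans s.condition
    apply biprod.hom_ext
    · simpa [biprod.desc_eq] using this
    · simp [biprod.desc_eq]
  · intro s m h1 h2
    have a1 := h1 =≫ biprod.fst
    have a2 := h1 =≫ biprod.snd
    have a3 := h2 =≫ biprod.snd
    simp [biprod.desc_eq] at a1 a2 a3
    apply biprod.hom_ext
    · simp [a1]
    · apply biprod.hom_ext <;> simp [a2, a3]

/-- The fundamental conflation of kernels for a composite. -/
lemma weq_comp_conf {A B C P Q K₁ K₂ : 𝒜} {f : A ⟶ B} {g : B ⟶ C} {t : P ⟶ B}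
    {s : Q ⟶ C} {k₁ : K₁ ⟶ A ⊞ P} {k₂ : K₂ ⟶ B ⊞ Q} (h₁ : E.conflation k₁ (biprod.desc f t))
    (h₂ : E.conflation k₂ (biprod.desc g s)) :
    ∃ (K : 𝒜) (k : K ⟶ A ⊞ (P ⊞ Q)) (a : K₁ ⟶ K) (b : K ⟶ K₂),
      E.conflation k (biprod.desc (f ≫ g) (biprod.desc (t ≫ g) s)) ∧ E.conflation a b := by
  obtain ⟨i', h3, -⟩ := conf_of_isPullback h₁ (isPullback_aux (Q := Q) f t)
  obtain ⟨K, k, a, b, h4, h5, -⟩ := conf_comp h3 h₂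
  refine ⟨K, k, a, b, ?_, h5⟩
  convert h4 using 1
  apply biprod.hom_ext'
  · simp
  · apply biprod.hom_ext' <;> simp

end weq

end ExAux

namespace ExAux

section main

variable {E : ExactStructure 𝒜}

lemma one_two (hwic : IsWIC E) (X Y : Set 𝒜)
    (hX : AdditivelyClosed X) (hY : AdditivelyClosed Y) :
    (((IsCotorsionPair E X Y ∧ IsCompleteCP E X Y ∧ IsThick E Y ∧
        X ∩ Y = {P : 𝒜 | IsProjObj E P}) ∧ HasEnoughProj E) ↔
      (IsCotorsionPair E X Y ∧ IsCompleteCP E X Y ∧ IsHereditaryCP E X Y ∧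
        HasEnoughProj E ∧ X ∩ Y = {P : 𝒜 | IsProjObj E P})) := by
  constructor
  · rintro ⟨⟨hc, hcc, ht, hω⟩, he⟩
    have hYc : ∀ {K A B : 𝒜} (i : K ⟶ A) (d : A ⟶ B), E.conflation i d → K ∈ Y → A ∈ Y → B ∈ Y :=
      fun i d h => (ht.2 i d h).1
    exact ⟨hc, hcc, ⟨fun i d h => X_ker hwic hX hc hcc hYc i d h, hYc⟩, he, hω⟩
  · rintro ⟨hc, hcc, hh, he, hω⟩
    have hP : ∀ P, P ∈ X → P ∈ Y → IsProjObj E P := fun P h1 h2 => by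
      change P ∈ {P : 𝒜 | IsProjObj E P}
      rw [← hω]; exact ⟨h1, h2⟩
    refine ⟨⟨hc, hcc, ⟨hY.2.2.2, fun i d h => ⟨hh.2 i d h, Y_ext hc h, Y_ker hY hc hcc hP i d h⟩⟩,
      hω⟩, he⟩

lemma cofibrant_iff (hwic : IsWIC E) {X : Set 𝒜} (hX : AdditivelyClosed X) (A : 𝒜) :
    Cofibrant (CoFibO E X) A ↔ A ∈ X := by
  constructor
  · rintro ⟨Z, d, h, hZ⟩
    obtain ⟨e, he⟩ := cdesc h (𝟙 A) (by simp)
    exact hX.2.2.2 d e he hZ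
  · intro h
    exact ⟨A, 𝟙 A, conf_zero_id A, h⟩

lemma fibrant_all (ω : Set 𝒜) (A : 𝒜) : Fibrant (FibO ω) A := by
  intro W _ g
  exact ⟨0, (isZero_zero 𝒜).eq_of_tgt _ _⟩

lemma two_three (hwic : IsWIC E) (X Y : Set 𝒜)
    (hX : AdditivelyClosed X) (hY : AdditivelyClosed Y)
    (H : IsCotorsionPair E X Y ∧ IsCompleteCP E X Y ∧ IsHereditaryCP E X Y ∧
        HasEnoughProj E ∧ X ∩ Y = {P : 𝒜 | IsProjObj E P}) :
    IsExactModelStr E (CoFibO E X) (FibO (X ∩ Y)) (WeqO E (X ∩ Y) Y) := by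
  have H' := (one_two hwic X Y hX hY).2 H
  obtain ⟨hc, hcc, hh, he, hω⟩ := H
  have ht : IsThick E Y := H'.1.2.2.1
  have hP : ∀ P ∈ X ∩ Y, IsProjObj E P := fun P h => by rw [hω] at h; exact h
  have hP' : ∀ P, IsProjObj E P → P ∈ X ∩ Y := fun P h => by rw [hω]; exact h
  have hωY : ∀ P ∈ X ∩ Y, P ∈ Y := fun P h => h.2
  have h0 : (0 : 𝒜) ∈ X ∩ Y := ⟨hX.1, hY.1⟩
  have hsum : ∀ P Q, P ∈ X ∩ Y → Q ∈ X ∩ Y → (P ⊞ Q) ∈ X ∩ Y := fun P Q h1 h2 =>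
    ⟨hX.2.1 _ _ h1.1 h2.1, hY.2.1 _ _ h1.2 h2.2⟩
  have hfib : ∀ {A B : 𝒜} (f : A ⟶ B), FibO (X ∩ Y) f ↔ IsDeflation E f := by
    intro A B f
    constructor
    · intro hf
      obtain ⟨P, d, hPp, hd⟩ := he B
      obtain ⟨h, hh⟩ := hf P (hP' P hPp) d
      exact defl_of_comp hwic h f (hh ▸ hd)
    · intro hf W hW g
      exact hP W hW f hf g
  -- choose deflations
  have hex : ∀ {A B : 𝒜} (f : A ⟶ B), ∃ (P : 𝒜) (_ : P ∈ X ∩ Y) (t : P ⟶ B) (K : 𝒜)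
      (k : K ⟶ A ⊞ P), E.conflation k (biprod.desc f t) := by
    intro A B f
    obtain ⟨P, d, hPp, hd⟩ := he B
    obtain ⟨K, k, hk⟩ := defl_desc hwic f hd
    exact ⟨P, hP' P hPp, d, K, k, hk⟩
  have h3 : ∀ {A B C : 𝒜} (f : A ⟶ B) (g : B ⟶ C), ∃ K₁ K K₂ : 𝒜,
      (K₁ ∈ Y ↔ WeqO E (X ∩ Y) Y f) ∧ (K ∈ Y ↔ WeqO E (X ∩ Y) Y (f ≫ g)) ∧
      (K₂ ∈ Y ↔ WeqO E (X ∩ Y) Y g) ∧ ∃ (a : K₁ ⟶ K) (b : K ⟶ K₂), E.conflation a b := by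
    intro A B C f g
    obtain ⟨P, hPP, t, K₁, k₁, hk₁⟩ := hex f
    obtain ⟨Q, hQ, s, K₂, k₂, hk₂⟩ := hex g
    obtain ⟨K, k, a, b, hk, hab⟩ := weq_comp_conf hk₁ hk₂
    refine ⟨K₁, K, K₂, ⟨fun h => ⟨P, hPP, t, K₁, k₁, hk₁, h⟩, fun h => ?_⟩,
      ⟨fun h => ⟨P ⊞ Q, hsum _ _ hPP hQ, _, K, k, hk, h⟩, fun h => ?_⟩,
      ⟨fun h => ⟨Q, hQ, s, K₂, k₂, hk₂, h⟩, fun h => ?_⟩, a, b, hab⟩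
    · exact weq_indep hwic hY hP hωY h hPP hk₁
    · exact weq_indep hwic hY hP hωY h (hsum _ _ hPP hQ) hk
    · exact weq_indep hwic hY hP hωY h hQ hk₂
  refine ⟨?_, ?_, ?_⟩
  · constructor
    · intro A B C f g hf hg
      obtain ⟨K₁, K, K₂, e1, e2, e3, a, b, h⟩ := h3 f g
      exact e2.1 ((ht.2 a b h).2.1 (e1.2 hf) (e3.2 hg))
    · intro A B C f g hf hg
      obtain ⟨K₁, K, K₂, e1, e2, e3, a, b, h⟩ := h3 f g
      exact e3.1 ((ht.2 a b h).1 (e1.2 hf) (e2.2 hg))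
    · intro A B C f g hf hg
      obtain ⟨K₁, K, K₂, e1, e2, e3, a, b, h⟩ := h3 f g
      exact e1.1 ((ht.2 a b h).2.2 (e2.2 hg) (e3.2 hf))
    · -- retract_cofib
      rintro A' B' A B g f ⟨φ₁, ψ₁, φ₂, ψ₂, e1, e2, e3, e4⟩ ⟨Z, d, hd, hZ⟩
      have i1 : IsInflation E φ₁ := infl_of_comp hwic φ₁ ψ₁ (by
        rw [e1]; exact ⟨_, _, conf_id_zero hwic _⟩)
      obtain ⟨_, _, i2⟩ := i1
      obtain ⟨_, _, _, _, i3, -⟩ := infl_comp hwic i2 hd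
      rw [e3] at i3
      obtain ⟨Z', d', hd'⟩ := infl_of_comp hwic g φ₂ ⟨_, _, i3⟩
      refine ⟨Z', d', hd', ?_⟩
      obtain ⟨a, ha⟩ := cdesc hd' (φ₂ ≫ d) (by
        rw [← Category.assoc, ← e3, Category.assoc, E.comp_zero hd, comp_zero])
      obtain ⟨b, hb⟩ := cdesc hd (ψ₂ ≫ d') (by
        rw [← Category.assoc, e4, Category.assoc, E.comp_zero hd', comp_zero])
      have := cepi hd'
      refine hX.2.2.2 a b ?_ hZ
      rw [← cancel_epi d', reassoc_of% ha, hb, reassoc_of% e2, Category.comp_id]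
    · -- retract_fib
      rintro A' B' A B g f ⟨φ₁, ψ₁, φ₂, ψ₂, e1, e2, e3, e4⟩ hf W hW u
      obtain ⟨h, hh⟩ := hf W hW (u ≫ φ₂)
      refine ⟨h ≫ ψ₁, ?_⟩
      rw [Category.assoc, ← e4, reassoc_of% hh, e2, Category.comp_id]
    · -- retract_weq
      intro A' B' A B g f hr hf
      obtain ⟨P, hPP, t, K, k, hk⟩ := hex g
      exact ⟨P, hPP, t, K, k, hk, weq_retract hwic hY hP hωY hf hr hPP hk⟩
    · -- lifting_left
      rintro A B M N i p a b ⟨C, q, hq, hC⟩ ⟨W, hW, t, K, k, hk, hK⟩ hp hab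
      have hpd := (hfib p).1 hp
      have hkz := E.comp_zero hk
      have hiq := E.comp_zero hq
      have := cmono hq
      have := cmono hk
      -- W → C is a deflation with kernel K
      have hWC : E.conflation (k ≫ biprod.snd) (t ≫ q) := by
        apply conf_of_ker
        · apply defl_of_comp hwic biprod.snd
          have := defl_comp ⟨_, _, hk⟩ ⟨_, _, hq⟩
          convert this using 1
          apply biprod.hom_ext' <;> simp [hiq]
        · have h := hkz =≫ q
          simp [biprod.desc_eq, hiq] at h
          simpa using h
        · intro T x hx
          rw [← cancel_mono k, zero_comp]
          have h := x ≫= hkz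
          try simp only [Category.assoc] at hx
          simp [biprod.desc_eq, reassoc_of% hx] at h
          apply biprod.hom_ext
          · rw [← cancel_mono i]
            simpa using h
          · simpa using hx
        · intro T x hx
          obtain ⟨y, hy⟩ := clift hq (x ≫ t) (by simpa using hx)
          obtain ⟨z, hz⟩ := clift hk (biprod.lift (-y) x) (by simp [hy])
          exact ⟨z, by rw [reassoc_of% hz]; simp⟩
      have hCY : C ∈ Y := hh.2 _ _ hWC hK hW.2
      have hCp : IsProjObj E C := hP C ⟨hC, hCY⟩
      obtain ⟨s, hs⟩ := hCp q ⟨_, _, hq⟩ (𝟙 C)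
      obtain ⟨r, hr1, hr2, hr3⟩ := retr_of_sec hq s hs
      obtain ⟨h, hh⟩ := hCp p hpd (s ≫ b)
      refine ⟨r ≫ a + q ≫ h, ?_, ?_⟩
      · simp [reassoc_of% hr1, reassoc_of% hiq]
      · have := hr3 =≫ b
        simpa [hab, hh] using this
    · -- lifting_right
      rintro A B M N i p a b ⟨C, q, hq, hC⟩ hp hpw hab
      obtain ⟨K, k, hk⟩ := (hfib p).1 hp
      have hK : K ∈ Y := ker_of_weq hwic hY h0 hP hωY hk hpw
      exact lifting hq hk ((hc.1 C).1 hC K hK) a b hab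
    · -- fact_left
      intro A B f
      obtain ⟨P, hPP, t, K, k, hk⟩ := hex f
      refine ⟨A ⊞ P, biprod.inl, biprod.desc f t, by simp, ⟨P, biprod.snd, conf_inl_snd hwic A P,
        hPP.1⟩, ⟨P, hPP, biprod.inr, 0, 0, ?_, hY.1⟩, (hfib _).2 ⟨_, _, hk⟩⟩
      have : biprod.desc (biprod.inl : A ⟶ A ⊞ P) biprod.inr = 𝟙 _ := by
        apply biprod.hom_ext' <;> simp
      rw [this]
      exact conf_zero_id _
    · -- fact_right
      intro A B f
      obtain ⟨P, hPP, t, K, k, hk⟩ := hex f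
      obtain ⟨Y₁, X₁, w, dw, hW, hX₁, hY₁⟩ := (hcc K).2
      obtain ⟨Q, f', i', d', hp, h1, h2⟩ := exists_po hk w
      obtain ⟨d'', h4, h5⟩ := conf_of_isPushout hW hp.flip
      obtain ⟨D, u, v, z, h6, h7, -⟩ := infl_comp hwic (conf_inl_snd hwic A P) h4
      refine ⟨Q, biprod.inl ≫ f', d', by simp [h2], ⟨D, u, h6, X_ext hc h7 hPP.1 hX₁⟩,
        (hfib _).2 ⟨_, _, h1⟩, weq_of_conf hwic hY h0 h1 hY₁⟩
  · intro A B f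
    constructor
    · rintro ⟨Z, d, h, hZ⟩
      exact ⟨Z, d, h, (cofibrant_iff hwic hX Z).2 hZ⟩
    · rintro ⟨Z, d, h, hZ⟩
      exact ⟨Z, d, h, (cofibrant_iff hwic hX Z).1 hZ⟩
  · intro A B f
    rw [hfib]
    constructor
    · rintro ⟨K, k, h⟩
      exact ⟨K, k, h, fibrant_all _ _⟩
    · rintro ⟨K, k, h, -⟩
      exact ⟨K, k, h⟩

lemma three_two (hwic : IsWIC E) (X Y : Set 𝒜)
    (hX : AdditivelyClosed X) (hY : AdditivelyClosed Y)
    (H : IsExactModelStr E (CoFibO E X) (FibO (X ∩ Y)) (WeqO E (X ∩ Y) Y)) :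
    IsCotorsionPair E X Y ∧ IsCompleteCP E X Y ∧ IsHereditaryCP E X Y ∧
        HasEnoughProj E ∧ X ∩ Y = {P : 𝒜 | IsProjObj E P} := by
  obtain ⟨M, -, HF⟩ := H
  have hfib : ∀ {A B : 𝒜} (f : A ⟶ B), FibO (X ∩ Y) f ↔ IsDeflation E f := by
    intro A B f
    rw [HF f]
    constructor
    · rintro ⟨K, k, h, -⟩
      exact ⟨K, k, h⟩
    · rintro ⟨K, k, h⟩
      exact ⟨K, k, h, fibrant_all _ _⟩
  have hP : ∀ P ∈ X ∩ Y, IsProjObj E P := fun P h A B d hd g => (hfib d).2 hd P h g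
  have hωY : ∀ P ∈ X ∩ Y, P ∈ Y := fun P h => h.2
  have h0 : (0 : 𝒜) ∈ X ∩ Y := ⟨hX.1, hY.1⟩
  have hcof : ∀ {A}, CoFibO E X (0 : (0 : 𝒜) ⟶ A) ↔ A ∈ X := cofibrant_iff hwic hX _
  -- trivial fibrations
  have hker : ∀ {K A B : 𝒜} {k : K ⟶ A} {f : A ⟶ B}, E.conflation k f → WeqO E (X ∩ Y) Y f →
      K ∈ Y := fun h hf => ker_of_weq hwic hY h0 hP hωY h hf
  have hweq : ∀ {K A B : 𝒜} {k : K ⟶ A} {f : A ⟶ B}, E.conflation k f → K ∈ Y →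
      WeqO E (X ∩ Y) Y f := fun h hf => weq_of_conf hwic hY h0 h hf
  -- deflation from ω
  have hdefl : ∀ B : 𝒜, ∃ (Z : 𝒜) (_ : Z ∈ X ∩ Y) (p : Z ⟶ B), IsDeflation E p := by
    intro B
    obtain ⟨Z, i, p, hip, hi, hiw, hpf⟩ := M.fact_left (0 : (0 : 𝒜) ⟶ B)
    have hi0 : i = 0 := (isZero_zero 𝒜).eq_of_src _ _
    subst hi0
    refine ⟨Z, ?_, p, (hfib p).1 hpf⟩
    obtain ⟨W, hW, t, K, k, hk, hK⟩ := id hiw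
    obtain ⟨s, -, hs⟩ := M.lifting_left (0 : (0 : 𝒜) ⟶ Z) (biprod.desc (0 : (0 : 𝒜) ⟶ Z) t) 0
      (𝟙 Z) hi hiw ((hfib _).2 ⟨_, _, hk⟩) (by simp)
    have hs' : (s ≫ biprod.snd) ≫ t = 𝟙 Z := by
      rw [← hs, biprod.desc_eq]; simp
    exact ⟨hX.2.2.2 _ _ hs' hW.1, hY.2.2.2 _ _ hs' hW.2⟩
  have happ1 : ∀ A : 𝒜, ∃ (Y₀ X₀ : 𝒜) (i : Y₀ ⟶ X₀) (d : X₀ ⟶ A),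
      E.conflation i d ∧ X₀ ∈ X ∧ Y₀ ∈ Y := by
    intro A
    obtain ⟨Z, j, q, hjq, hj, hqf, hqw⟩ := M.fact_right (0 : (0 : 𝒜) ⟶ A)
    have hj0 : j = 0 := (isZero_zero 𝒜).eq_of_src _ _
    subst hj0
    obtain ⟨K, k, hk⟩ := (hfib q).1 hqf
    exact ⟨K, Z, k, q, hk, hcof.1 hj, hker hk hqw⟩
  have happ2 : ∀ A : 𝒜, ∃ (Y₁ X₁ : 𝒜) (i : A ⟶ Y₁) (d : Y₁ ⟶ X₁),
      E.conflation i d ∧ X₁ ∈ X ∧ Y₁ ∈ Y := by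
    intro A
    obtain ⟨Z, j, q, hjq, ⟨C, d, hd, hC⟩, hqf, hqw⟩ := M.fact_right (0 : A ⟶ (0 : 𝒜))
    have hq0 : q = 0 := (isZero_zero 𝒜).eq_of_tgt _ _
    subst hq0
    exact ⟨Z, C, j, d, hd, hC, hker (conf_id_zero hwic Z) hqw⟩
  have hXY : ∀ A ∈ X, ∀ B ∈ Y, Ext1IsZero E A B := by
    intro A hA B hB
    apply ext_of_sec
    intro N i d hd
    obtain ⟨s, -, hs⟩ := M.lifting_right (0 : (0 : 𝒜) ⟶ A) d 0 (𝟙 A) (hcof.2 hA)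
      ((hfib d).2 ⟨_, _, hd⟩) (hweq hd hB) (by simp)
    exact ⟨s, hs⟩
  have hc : IsCotorsionPair E X Y := by
    refine ⟨fun A => ⟨fun hA B hB => hXY A hA B hB, fun h => ?_⟩,
      fun B => ⟨fun hB A hA => hXY A hA B hB, fun h => ?_⟩⟩
    · obtain ⟨Y₀, X₀, i, d, hid, hX₀, hY₀⟩ := happ1 A
      obtain ⟨r, hr⟩ := h Y₀ hY₀ i d hid
      obtain ⟨s, hs⟩ := sec_of_retr hid r hr
      exact hX.2.2.2 s d hs hX₀
    · obtain ⟨Y₀, X₀, i, d, hid, hX₀, hY₀⟩ := happ2 B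
      obtain ⟨r, hr⟩ := h X₀ hX₀ i d hid
      exact hY.2.2.2 i r hr hY₀
  have hcc : IsCompleteCP E X Y := fun A => ⟨happ1 A, happ2 A⟩
  have hYc : ∀ {K A B : 𝒜} (i : K ⟶ A) (d : A ⟶ B), E.conflation i d → K ∈ Y → A ∈ Y →
      B ∈ Y := by
    intro K A B i d h hK hA
    have h1 := hweq h hK
    have h2 := hweq (conf_id_zero hwic A) hA
    have h3 := M.weq_cancel_left d (0 : B ⟶ (0 : 𝒜)) h1 (by rw [comp_zero]; exact h2)
    exact hker (conf_id_zero hwic B) h3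
  refine ⟨hc, hcc, ⟨fun i d h => X_ker hwic hX hc hcc hYc i d h, hYc⟩, ?_, ?_⟩
  · intro B
    obtain ⟨Z, hZ, p, hp⟩ := hdefl B
    exact ⟨Z, p, hP Z hZ, hp⟩
  · ext P
    refine ⟨fun h => hP P h, fun h => ?_⟩
    obtain ⟨Z, hZ, p, hp⟩ := hdefl P
    obtain ⟨s, hs⟩ := h p hp (𝟙 P)
    exact ⟨hX.2.2.2 _ _ hs hZ.1, hY.2.2.2 _ _ hs hZ.2⟩

end main

end ExAux

/-- Characterization of generalized projective complete cotorsion pairs via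
projective/exact `ω`-model structures. -/
theorem stmt_19 (E : ExactStructure 𝒜) (hwic : IsWIC E) (X Y : Set 𝒜)
    (hX : AdditivelyClosed X) (hY : AdditivelyClosed Y) :
    (((IsCotorsionPair E X Y ∧ IsCompleteCP E X Y ∧ IsThick E Y ∧
        X ∩ Y = {P : 𝒜 | IsProjObj E P}) ∧ HasEnoughProj E) ↔
      (IsCotorsionPair E X Y ∧ IsCompleteCP E X Y ∧ IsHereditaryCP E X Y ∧
        HasEnoughProj E ∧ X ∩ Y = {P : 𝒜 | IsProjObj E P})) ∧
    ((IsCotorsionPair E X Y ∧ IsCompleteCP E X Y ∧ IsHereditaryCP E X Y ∧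
        HasEnoughProj E ∧ X ∩ Y = {P : 𝒜 | IsProjObj E P}) ↔
      IsExactModelStr E (CoFibO E X) (FibO (X ∩ Y)) (WeqO E (X ∩ Y) Y)) ∧
    (IsExactModelStr E (CoFibO E X) (FibO (X ∩ Y)) (WeqO E (X ∩ Y) Y) ↔
      IsProjectiveModelStr E (CoFibO E X) (FibO (X ∩ Y)) (WeqO E (X ∩ Y) Y)) := by
  refine ⟨ExAux.one_two hwic X Y hX hY, ⟨ExAux.two_three hwic X Y hX hY,
    ExAux.three_two hwic X Y hX hY⟩, fun h => ⟨h, fun A => ExAux.fibrant_all _ A⟩, fun h => h.1⟩
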